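/- For every Λ > 0 there exists a constant C > 0, depending only on φ and Λ, with the following property. Let x ∈ ℝ⁴ and r > 0, suppose u is harmonic on an open set containing the closed ball B̄_x(4r), and suppose H_φ(x,t) > 0 and N_φ(x,t) ≤ Λ for all t ∈ (0, 4r]. Then ∫_{B_x(3r)∖B_x(r/3)} |∂_{η_x}u(y) − N_φ(x,|y−x|)·u(y)|² dy ≤ C·r·H_φ(x,r)·W_{r/4}^{4r}(x). -/

import Mathlib

open Metric MeasureTheory
open scoped RealInnerProductSpace

noncomputable section

abbrev E4 := EuclideanSpace ℝ (Fin 4)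

variable {E : Type*} [NormedAddCommGroup E] [InnerProductSpace ℝ E] [FiniteDimensional ℝ E]

/-- `u` is smooth and harmonic (the Laplacian, i.e. the sum of the pure second
derivatives in the coordinate directions, vanishes) on `Ω`. -/
def IsHarmonicOn (u : E4 → E) (Ω : Set E4) : Prop :=
  ContDiffOn ℝ (⊤ : ℕ∞) u Ω ∧
  ∀ x ∈ Ω, ∑ i : Fin 4,
    iteratedFDeriv ℝ 2 u x ![EuclideanSpace.single i (1:ℝ), EuclideanSpace.single i 1] = 0

/-- `|∇u(y)|²`, the squared Frobenius norm of the derivative of `u` at `y`. -/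
def gradSq (u : E4 → E) (y : E4) : ℝ :=
  ∑ i : Fin 4, ‖fderiv ℝ u y (EuclideanSpace.single i (1:ℝ))‖ ^ 2

/-- `D_φ(x,r) = ∫ |∇u(y)|² φ(|y−x|/r) dy`. -/
def Dphi (φ : ℝ → ℝ) (u : E4 → E) (x : E4) (r : ℝ) : ℝ :=
  ∫ y, gradSq u y * φ (‖y - x‖ / r)

/-- `H_φ(x,r) = −∫ |u(y)|² |y−x|⁻¹ φ'(|y−x|/r) dy`. -/
def Hphi (φ : ℝ → ℝ) (u : E4 → E) (x : E4) (r : ℝ) : ℝ :=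
  -∫ y, ‖u y‖ ^ 2 * ‖y - x‖⁻¹ * deriv φ (‖y - x‖ / r)

/-- `E_φ(x,r) = −∫ |∂_{ν_x}u(y)|² |y−x| φ'(|y−x|/r) dy`, where `ν_x(y) = (y−x)/|y−x|`. -/
def Ephi (φ : ℝ → ℝ) (u : E4 → E) (x : E4) (r : ℝ) : ℝ :=
  -∫ y, ‖fderiv ℝ u y (‖y - x‖⁻¹ • (y - x))‖ ^ 2 * ‖y - x‖ * deriv φ (‖y - x‖ / r)

/-- The smoothed frequency `N_φ(x,r) = r D_φ(x,r) / H_φ(x,r)`. -/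
def Nphi (φ : ℝ → ℝ) (u : E4 → E) (x : E4) (r : ℝ) : ℝ :=
  r * Dphi φ u x r / Hphi φ u x r

/-!
The derivative of the frequency measures the failure of homogeneity: for harmonic `u`,
`N'(t) = 2 / (t H(t)) · ∫ |∂_η u - N(t) u|² w_t` with `w_t(y) = -|y - x|⁻¹ φ'(|y - x| / t)`.
It follows from two applications of the divergence theorem, to the field `⟪u, ∇u⟫` for `H'` and to
the Rellich field `⟪∂_η u, ∇u⟫` for `D'`. In particular `N` and `H` are nondecreasing.

The weight `w_t` only sees the shell `3t/4 ≤ |y - x| ≤ t`, but averaging over scales removes it: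
`d/dt φ(|y - x| / t) = (|y - x| / t)² w_t(y) ≤ w_t(y)`, so `∫ w_t(y) dt ≥ 1` over `[r/4, 4r]` for
every `y` in the annulus. Replacing `N(|y - x|)` by `N(t)` costs at most `W = N(4r) - N(r/4)`, so by
Fubini the unweighted integral is at most `∫ (t H(t) N'(t) + 2 W² H(t)) dt ≲ r H(4r) (W + W²)`.
Finally `W ≤ Λ`, and `H(4r) ≲ H(r)` because `(log H)' = (n - 1 + 2 N) / t` with `N ≤ Λ`.
-/

section

open Set Filter Topology InnerProductSpace Module

/-- The cut-off profiles used to smooth the energy and the height: `φ` is `C¹` and nonincreasing,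
equal to `1` on `(-∞, 3/4]` and to `0` on `[1, ∞)`. -/
structure IsRadialCutoff (φ : ℝ → ℝ) : Prop where
  contDiff : ContDiff ℝ 1 φ
  antitone : Antitone φ
  eq_one : ∀ s ≤ (3 / 4 : ℝ), φ s = 1
  eq_zero : ∀ s, (1 : ℝ) ≤ s → φ s = 0

namespace IsRadialCutoff

variable {φ : ℝ → ℝ}

theorem nonneg (hφ : IsRadialCutoff φ) (s : ℝ) : 0 ≤ φ s :=
  (hφ.eq_zero _ (le_max_right s 1)).ge.trans (hφ.antitone (le_max_left s 1))

theorem le_one (hφ : IsRadialCutoff φ) (s : ℝ) : φ s ≤ 1 :=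
  (hφ.antitone (min_le_left s (3 / 4))).trans (hφ.eq_one _ (min_le_right s (3 / 4))).le

theorem hasDerivAt (hφ : IsRadialCutoff φ) (s : ℝ) : HasDerivAt φ (deriv φ s) s :=
  (hφ.contDiff.differentiable one_ne_zero s).hasDerivAt

theorem continuous_deriv (hφ : IsRadialCutoff φ) : Continuous (deriv φ) :=
  hφ.contDiff.continuous_deriv le_rfl

theorem deriv_nonpos (hφ : IsRadialCutoff φ) (s : ℝ) : deriv φ s ≤ 0 :=
  hφ.antitone.deriv_nonpos

theorem deriv_eq_zero_of_le (hφ : IsRadialCutoff φ) {s : ℝ} (hs : s ≤ 3 / 4) : deriv φ s = 0 :=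
  IsLocalMax.deriv_eq_zero <| Eventually.of_forall fun y ↦
    (hφ.le_one y).trans (hφ.eq_one s hs).ge

theorem deriv_eq_zero_of_one_le (hφ : IsRadialCutoff φ) {s : ℝ} (hs : 1 ≤ s) : deriv φ s = 0 :=
  IsLocalMin.deriv_eq_zero <| Eventually.of_forall fun y ↦
    (hφ.eq_zero s hs).le.trans (hφ.nonneg y)

end IsRadialCutoff

section NormedSpace

variable {V : Type*} [NormedAddCommGroup V]

/-- The weight `-|y - x|⁻¹ φ'(|y - x| / t)` defining the smoothed height at scale `t`. For a cut-off
profile it lives on the shell `3t/4 ≤ |y - x| ≤ t`, so the junk value of `|y - x|⁻¹` at `y = x` is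
harmless. -/
def radialWeight (φ : ℝ → ℝ) (x : V) (t : ℝ) (y : V) : ℝ :=
  -(‖y - x‖⁻¹ * deriv φ (‖y - x‖ / t))

theorem radialWeight_eq_inv_mul_comp_smul [NormedSpace ℝ V] (φ : ℝ → ℝ) (x y : V) {t : ℝ}
    (ht : 0 < t) :
    radialWeight φ x t y = t⁻¹ * radialWeight φ 0 1 (t⁻¹ • (y - x)) := by
  have hnorm : ‖t⁻¹ • (y - x)‖ = ‖y - x‖ / t := by
    rw [norm_smul, Real.norm_of_nonneg (by positivity), inv_mul_eq_div]
  simp only [radialWeight, sub_zero, div_one, hnorm, inv_div]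
  field_simp

namespace IsRadialCutoff

variable {φ : ℝ → ℝ}

theorem radialWeight_nonneg (hφ : IsRadialCutoff φ) (x : V) (t : ℝ) (y : V) :
    0 ≤ radialWeight φ x t y :=
  neg_nonneg.2 <| mul_nonpos_of_nonneg_of_nonpos (by positivity) (hφ.deriv_nonpos _)

theorem radialWeight_eq_zero_of_norm_le (hφ : IsRadialCutoff φ) {x y : V} {t : ℝ} (ht : 0 < t)
    (hy : ‖y - x‖ ≤ 3 / 4 * t) : radialWeight φ x t y = 0 := by
  rw [radialWeight, hφ.deriv_eq_zero_of_le ((div_le_iff₀ ht).2 hy), mul_zero, neg_zero]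

theorem radialWeight_eq_zero_of_le_norm (hφ : IsRadialCutoff φ) {x y : V} {t : ℝ} (ht : 0 < t)
    (hy : t ≤ ‖y - x‖) : radialWeight φ x t y = 0 := by
  rw [radialWeight, hφ.deriv_eq_zero_of_one_le ((one_le_div ht).2 hy), mul_zero, neg_zero]

theorem support_radialWeight_subset (hφ : IsRadialCutoff φ) (x : V) {t : ℝ} (ht : 0 < t) :
    Function.support (radialWeight φ x t) ⊆ closedBall x t := by
  intro y hy
  by_contra hyt
  rw [mem_closedBall_iff_norm, not_le] at hyt
  exact hy (hφ.radialWeight_eq_zero_of_le_norm ht hyt.le)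

theorem support_comp_norm_subset (hφ : IsRadialCutoff φ) (x : V) {t : ℝ} (ht : 0 < t) :
    Function.support (fun y : V ↦ φ (‖y - x‖ / t)) ⊆ closedBall x t := by
  intro y hy
  by_contra hyt
  rw [mem_closedBall_iff_norm, not_le] at hyt
  exact hy (hφ.eq_zero _ ((one_le_div ht).2 hyt.le))

theorem continuous_comp_norm (hφ : IsRadialCutoff φ) (x : V) (t : ℝ) :
    Continuous fun y : V ↦ φ (‖y - x‖ / t) := by
  have := hφ.contDiff.continuous
  fun_prop

theorem continuous_radialWeight_zero_one (hφ : IsRadialCutoff φ) :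
    Continuous (radialWeight φ (0 : V) 1) := by
  refine continuous_iff_continuousAt.2 fun z ↦ ?_
  rcases eq_or_ne z 0 with rfl | hz
  · refine continuousAt_const.congr (f := fun _ ↦ 0) ?_
    filter_upwards [ball_mem_nhds (0 : V) (by norm_num : (0 : ℝ) < 3 / 4)] with y hy
    refine (hφ.radialWeight_eq_zero_of_norm_le one_pos ?_).symm
    simpa using (mem_ball_iff_norm.1 hy).le
  · have hz' : ‖z - 0‖ ≠ 0 := by simpa using hz
    have := hφ.continuous_deriv
    unfold radialWeight
    fun_prop (disch := assumption)

variable [NormedSpace ℝ V]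

theorem continuousOn_radialWeight (hφ : IsRadialCutoff φ) (x : V) :
    ContinuousOn (fun p : ℝ × V ↦ radialWeight φ x p.1 p.2) (Ioi 0 ×ˢ univ) := by
  have hw := hφ.continuous_radialWeight_zero_one (V := V)
  have hne : ∀ p ∈ (Ioi 0 ×ˢ univ : Set (ℝ × V)), p.1 ≠ 0 := fun p hp ↦ hp.1.ne'
  refine ContinuousOn.congr (f := fun p : ℝ × V ↦
    p.1⁻¹ * radialWeight φ 0 1 (p.1⁻¹ • (p.2 - x))) ?_ fun p hp ↦
      radialWeight_eq_inv_mul_comp_smul φ x p.2 hp.1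
  fun_prop (disch := assumption)

theorem continuous_radialWeight (hφ : IsRadialCutoff φ) (x : V) {t : ℝ} (ht : 0 < t) :
    Continuous (radialWeight φ x t) :=
  (hφ.continuousOn_radialWeight x).comp_continuous (f := fun y ↦ (t, y)) (by fun_prop)
    fun _ ↦ ⟨ht, mem_univ _⟩

end IsRadialCutoff

end NormedSpace

section InnerProductSpace

variable {V : Type*} [NormedAddCommGroup V] [InnerProductSpace ℝ V]

theorem IsRadialCutoff.hasFDerivAt_comp_norm {φ : ℝ → ℝ} (hφ : IsRadialCutoff φ) (x y : V) {t : ℝ}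
    (ht : 0 < t) :
    HasFDerivAt (fun z : V ↦ φ (‖z - x‖ / t))
      (-(t⁻¹ * radialWeight φ x t y) • innerSL ℝ (y - x)) y := by
  rcases eq_or_ne y x with rfl | hne
  · have hconst : (fun z : V ↦ φ (‖z - y‖ / t)) =ᶠ[𝓝 y] fun _ ↦ 1 := by
      filter_upwards [ball_mem_nhds y (by positivity : 0 < 3 / 4 * t)] with z hz
      exact hφ.eq_one _ ((div_le_iff₀ ht).2 (mem_ball_iff_norm.1 hz).le)
    simpa using (hasFDerivAt_const (1 : ℝ) y).congr_of_eventuallyEq hconst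
  · have hpos : 0 < ‖y - x‖ := norm_pos_iff.2 (sub_ne_zero.2 hne)
    have hnorm : HasFDerivAt (fun z : V ↦ ‖z - x‖) (‖y - x‖⁻¹ • innerSL ℝ (y - x)) y := by
      have := ((hasFDerivAt_id y).sub_const x).norm_sq.sqrt (pow_pos hpos 2).ne'
      simp only [id_eq, Real.sqrt_sq (norm_nonneg _)] at this
      convert this using 1
      ext e
      simp
      field_simp
    refine ((hφ.hasDerivAt (‖y - x‖ / t)).comp_hasFDerivAt y
      (hnorm.mul_const t⁻¹)).congr_fderiv ?_
    rw [smul_smul, smul_smul, radialWeight]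
    ring_nf

end InnerProductSpace

section ParametricIntegral

theorem integral_mul_congr_of_support_subset {X : Type*} [MeasurableSpace X] {μ : Measure X}
    {S : Set X} {f₁ f₂ g : X → ℝ} (hf : EqOn f₁ f₂ S) (hg : Function.support g ⊆ S) :
    ∫ y, f₁ y * g y ∂μ = ∫ y, f₂ y * g y ∂μ := by
  congr 1 with y
  by_cases hy : y ∈ S
  · rw [hf hy]
  · simp [Function.notMem_support.1 fun h ↦ hy (hg h)]

variable {X : Type*} [TopologicalSpace X] [T2Space X] [MeasurableSpace X] [BorelSpace X]
  {μ : Measure X} [IsFiniteMeasureOnCompacts μ] {K : Set X}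

theorem integrable_mul_of_support_subset {f g : X → ℝ} (hK : IsCompact K) (hf : ContinuousOn f K)
    (hg : Continuous g) (hgK : Function.support g ⊆ K) : Integrable (fun y ↦ f y * g y) μ :=
  (integrableOn_iff_integrable_of_support_subset
    ((Function.support_mul_subset_right f g).trans hgK)).1
    ((hf.mul hg.continuousOn).integrableOn_compact hK)

theorem hasDerivAt_setIntegral_of_continuousOn {a b t : ℝ} {G G' : ℝ → X → ℝ} (hK : IsCompact K)
    (ht : t ∈ Ioo a b) (hG : ContinuousOn (Function.uncurry G) (Icc a b ×ˢ K))
    (hG' : ContinuousOn (Function.uncurry G') (Icc a b ×ˢ K))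
    (hderiv : ∀ s ∈ Icc a b, ∀ z ∈ K, HasDerivAt (G · z) (G' s z) s) :
    HasDerivAt (fun s ↦ ∫ z in K, G s z ∂μ) (∫ z in K, G' t z ∂μ) t := by
  have hslice {g : ℝ → X → ℝ} (hg : ContinuousOn (Function.uncurry g) (Icc a b ×ˢ K)) {s : ℝ}
      (hs : s ∈ Icc a b) : IntegrableOn (g s) K μ :=
    (hg.comp (f := fun z ↦ (s, z)) (by fun_prop) fun z hz ↦ ⟨hs, hz⟩).integrableOn_compact hK
  obtain ⟨C, hC⟩ := (isCompact_Icc.prod hK).exists_bound_of_continuousOn hG'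
  have hnhds : Icc a b ∈ 𝓝 t := Icc_mem_nhds ht.1 ht.2
  have ht' : t ∈ Icc a b := Ioo_subset_Icc_self ht
  refine (hasDerivAt_integral_of_dominated_loc_of_deriv_le (bound := fun _ ↦ C) hnhds
    ?_ (hslice hG ht') (hslice hG' ht').aestronglyMeasurable ?_ ?_ ?_).2
  · filter_upwards [hnhds] with s hs using (hslice hG hs).aestronglyMeasurable
  · exact (ae_restrict_iff' hK.measurableSet).2 <| .of_forall fun z hz s hs ↦ hC (s, z) ⟨hs, hz⟩
  · exact integrableOn_const hK.measure_ne_top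
  · exact (ae_restrict_iff' hK.measurableSet).2 <| .of_forall fun z hz s hs ↦ hderiv s hs z hz

end ParametricIntegral

section ChangeOfScale

variable {V : Type*} [NormedAddCommGroup V] [NormedSpace ℝ V] [FiniteDimensional ℝ V]
  [MeasurableSpace V] [BorelSpace V] {μ : Measure V} [μ.IsAddHaarMeasure]
  {f κ : V → ℝ} {x : V} {R t : ℝ}

theorem integral_mul_comp_inv_smul_sub (f κ : V → ℝ) (x : V) (ht : 0 < t) :
    ∫ y, f y * κ (t⁻¹ • (y - x)) ∂μ = t ^ finrank ℝ V * ∫ z, f (x + t • z) * κ z ∂μ := by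
  calc ∫ y, f y * κ (t⁻¹ • (y - x)) ∂μ
      = ∫ y, f (x + t • t⁻¹ • y) * κ (t⁻¹ • y) ∂μ := by
        rw [← integral_add_left_eq_self _ x]
        simp only [add_sub_cancel_left, smul_inv_smul₀ ht.ne']
    _ = t ^ finrank ℝ V * ∫ z, f (x + t • z) * κ z ∂μ :=
        Measure.integral_comp_inv_smul_of_nonneg μ (fun z ↦ f (x + t • z) * κ z) ht.le

theorem hasDerivAt_integral_comp_add_smul_mul (hf : ContDiffOn ℝ 1 f (ball x R))
    (hκ : Continuous κ) (hκ1 : Function.support κ ⊆ closedBall 0 1) (ht : 0 < t) (htR : t < R) :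
    HasDerivAt (fun s ↦ ∫ z, f (x + s • z) * κ z ∂μ)
      (∫ z, fderiv ℝ f (x + t • z) z * κ z ∂μ) t := by
  obtain ⟨ρ, htρ, hρR⟩ := exists_between htR
  have hmaps : MapsTo (fun p : ℝ × V ↦ x + p.1 • p.2) (Icc 0 ρ ×ˢ closedBall 0 1) (ball x R) := by
    rintro ⟨s, z⟩ ⟨hs, hz⟩
    rw [mem_ball_iff_norm, add_sub_cancel_left, norm_smul, Real.norm_of_nonneg hs.1]
    calc s * ‖z‖ ≤ s * 1 := by gcongr; exacts [hs.1, mem_closedBall_zero_iff.1 hz]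
      _ < R := by linarith [hs.2]
  have hf' := hf.continuousOn_fderiv_of_isOpen isOpen_ball le_rfl
  have hrestrict (g : V → ℝ) : ∫ z in closedBall 0 1, g z * κ z ∂μ = ∫ z, g z * κ z ∂μ :=
    setIntegral_eq_integral_of_forall_compl_eq_zero fun z hz ↦ by
      rw [Function.notMem_support.1 fun h ↦ hz (hκ1 h), mul_zero]
  simp only [← hrestrict]
  refine hasDerivAt_setIntegral_of_continuousOn (a := 0) (b := ρ)
    (G := fun s z ↦ f (x + s • z) * κ z) (G' := fun s z ↦ fderiv ℝ f (x + s • z) z * κ z)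
    (isCompact_closedBall 0 1) ⟨ht, htρ⟩ ?_ ?_ fun s hs z hz ↦ ?_
  · exact (hf.continuousOn.comp (by fun_prop) hmaps).mul (by fun_prop)
  · exact ((hf'.comp (by fun_prop) hmaps).clm_apply continuousOn_snd).mul (by fun_prop)
  · have hfs : HasFDerivAt f (fderiv ℝ f (x + s • z)) (x + s • z) :=
      ((hf.contDiffAt (isOpen_ball.mem_nhds (hmaps (x := (s, z)) ⟨hs, hz⟩))).differentiableAt
        one_ne_zero).hasFDerivAt
    simpa using (hfs.comp_hasDerivAt s (((hasDerivAt_id s).smul_const z).const_add x)).mul_const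
      (κ z)

theorem hasDerivAt_integral_mul_comp_inv_smul_sub (hf : ContDiffOn ℝ 1 f (ball x R))
    (hκ : Continuous κ) (hκ1 : Function.support κ ⊆ closedBall 0 1) (ht : 0 < t) (htR : t < R) :
    HasDerivAt (fun s ↦ ∫ y, f y * κ (s⁻¹ • (y - x)) ∂μ)
      (t⁻¹ * (finrank ℝ V * ∫ y, f y * κ (t⁻¹ • (y - x)) ∂μ +
        ∫ y, fderiv ℝ f y (y - x) * κ (t⁻¹ • (y - x)) ∂μ)) t := by
  have hmain := (hasDerivAt_pow (finrank ℝ V) t).mul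
    (hasDerivAt_integral_comp_add_smul_mul (μ := μ) hf hκ hκ1 ht htR)
  refine (hmain.congr_of_eventuallyEq ?_).congr_deriv ?_
  · filter_upwards [eventually_gt_nhds ht] with s hs
    exact integral_mul_comp_inv_smul_sub f κ x hs
  · have hpow (n : ℕ) : (n : ℝ) * t ^ (n - 1) = t⁻¹ * (n * t ^ n) := by
      cases n with
      | zero => simp
      | succ n => rw [Nat.add_sub_cancel, pow_succ]; field_simp
    rw [hpow, integral_mul_comp_inv_smul_sub f κ x ht,
      integral_mul_comp_inv_smul_sub (fun y ↦ fderiv ℝ f y (y - x)) κ x ht]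
    simp only [add_sub_cancel_left, map_smul, smul_eq_mul, mul_assoc, integral_const_mul]
    field_simp

end ChangeOfScale

section Divergence

variable {V : Type*} [NormedAddCommGroup V] [InnerProductSpace ℝ V] [FiniteDimensional ℝ V]
  [MeasurableSpace V] [BorelSpace V] {μ : Measure V} [μ.IsAddHaarMeasure]
  {φ : ℝ → ℝ} {x : V} {R t : ℝ}

theorem IsRadialCutoff.integrable_mul_comp_norm (hφ : IsRadialCutoff φ) {f : V → ℝ}
    (hf : ContinuousOn f (ball x R)) (ht : 0 < t) (htR : t < R) :
    Integrable (fun y ↦ f y * φ (‖y - x‖ / t)) μ :=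
  integrable_mul_of_support_subset (isCompact_closedBall x t)
    (hf.mono (closedBall_subset_ball htR)) (hφ.continuous_comp_norm x t)
    (hφ.support_comp_norm_subset x ht)

theorem IsRadialCutoff.integrable_mul_radialWeight (hφ : IsRadialCutoff φ) {f : V → ℝ}
    (hf : ContinuousOn f (ball x R)) (ht : 0 < t) (htR : t < R) :
    Integrable (fun y ↦ f y * radialWeight φ x t y) μ :=
  integrable_mul_of_support_subset (isCompact_closedBall x t)
    (hf.mono (closedBall_subset_ball htR)) (hφ.continuous_radialWeight x ht)
    (hφ.support_radialWeight_subset x ht)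

theorem IsRadialCutoff.integral_fderiv_apply_mul_comp_norm (hφ : IsRadialCutoff φ) {f : V → ℝ}
    (hf : ContDiffOn ℝ 1 f (ball x R)) (ht : 0 < t) (htR : t < R) (e : V) :
    ∫ y, fderiv ℝ f y e * φ (‖y - x‖ / t) ∂μ
      = t⁻¹ * ∫ y, f y * ⟪y - x, e⟫ * radialWeight φ x t y ∂μ := by
  have hcutoff (y : V) : fderiv ℝ (fun z : V ↦ φ (‖z - x‖ / t)) y e
      = -(t⁻¹ * (⟪y - x, e⟫ * radialWeight φ x t y)) := by
    rw [(hφ.hasFDerivAt_comp_norm x y ht).fderiv, smul_apply, innerSL_apply_apply, smul_eq_mul]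
    ring
  have hmul (y : V) : f y * fderiv ℝ (fun z : V ↦ φ (‖z - x‖ / t)) y e
      = -t⁻¹ * (f y * ⟪y - x, e⟫ * radialWeight φ x t y) := by
    rw [hcutoff]
    ring
  have hf' := (hf.continuousOn_fderiv_of_isOpen isOpen_ball le_rfl).clm_apply
    (continuousOn_const (c := e))
  have hparts := integral_mul_fderiv_eq_neg_fderiv_mul_of_integrable (μ := μ) (f := f) (v := e)
    (g := fun z ↦ φ (‖z - x‖ / t)) (hφ.integrable_mul_comp_norm hf' ht htR) ?_
    (hφ.integrable_mul_comp_norm hf.continuousOn ht htR) (fun y hy ↦ ?_)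
    fun y _ ↦ (hφ.hasFDerivAt_comp_norm x y ht).differentiableAt
  · simp only [hmul, integral_const_mul] at hparts
    linarith
  · simp only [hmul]
    exact (hφ.integrable_mul_radialWeight (hf.continuousOn.mul (by fun_prop)) ht htR).const_mul _
  · have hyt := closure_minimal (hφ.support_comp_norm_subset x ht) isClosed_closedBall hy
    exact (hf.contDiffAt (isOpen_ball.mem_nhds (closedBall_subset_ball htR hyt))).differentiableAt
      one_ne_zero

theorem IsRadialCutoff.integral_sum_fderiv_mul_comp_norm {ι : Type*} [Fintype ι]
    (hφ : IsRadialCutoff φ) (e : ι → V) {f : ι → V → ℝ}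
    (hf : ∀ i, ContDiffOn ℝ 1 (f i) (ball x R)) (ht : 0 < t) (htR : t < R) :
    ∫ y, (∑ i, fderiv ℝ (f i) y (e i)) * φ (‖y - x‖ / t) ∂μ
      = t⁻¹ * ∫ y, (∑ i, f i y * ⟪y - x, e i⟫) * radialWeight φ x t y ∂μ := by
  simp only [Finset.sum_mul]
  rw [integral_finsetSum, integral_finsetSum, Finset.mul_sum]
  · exact Finset.sum_congr rfl fun i _ ↦
      hφ.integral_fderiv_apply_mul_comp_norm (hf i) ht htR (e i)
  · exact fun i _ ↦ hφ.integrable_mul_radialWeight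
      ((hf i).continuousOn.mul (by fun_prop)) ht htR
  · exact fun i _ ↦ hφ.integrable_mul_comp_norm
      (((hf i).continuousOn_fderiv_of_isOpen isOpen_ball le_rfl).clm_apply
        continuousOn_const) ht htR

end Divergence

section Gradient

variable {V F ι : Type*} [NormedAddCommGroup V] [InnerProductSpace ℝ V]
  [NormedAddCommGroup F] [InnerProductSpace ℝ F] [Fintype ι]

/-- The squared Frobenius norm `|∇u(y)|²` of the derivative of `u` at `y`, computed in the
orthonormal basis `b`. -/
def gradNormSq (b : OrthonormalBasis ι ℝ V) (u : V → F) (y : V) : ℝ :=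
  ∑ i, ‖fderiv ℝ u y (b i)‖ ^ 2

variable {b : OrthonormalBasis ι ℝ V} {u : V → F} {x y : V}

theorem gradNormSq_nonneg (b : OrthonormalBasis ι ℝ V) (u : V → F) (y : V) :
    0 ≤ gradNormSq b u y :=
  Finset.sum_nonneg fun _ _ ↦ sq_nonneg _

theorem sum_inner_fderiv_mul_inner (b : OrthonormalBasis ι ℝ V) (u : V → F) (v : F) (y w : V) :
    ∑ i, ⟪v, fderiv ℝ u y (b i)⟫ * ⟪w, b i⟫ = ⟪v, fderiv ℝ u y w⟫ := by
  conv_rhs => rw [← b.sum_repr' w]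
  simp only [map_sum, map_smul, inner_sum, inner_smul_right, real_inner_comm w, mul_comm]

theorem contDiffOn_fderiv_apply {s : Set V} (hs : IsOpen s) (hu : ContDiffOn ℝ 2 u s) (v : V) :
    ContDiffOn ℝ 1 (fun y ↦ fderiv ℝ u y v) s :=
  (hu.fderiv_of_isOpen hs (by norm_num)).clm_apply contDiffOn_const

theorem contDiffOn_fderiv_sub_apply {s : Set V} (hs : IsOpen s) (hu : ContDiffOn ℝ 2 u s)
    (x : V) : ContDiffOn ℝ 1 (fun y ↦ fderiv ℝ u y (y - x)) s :=
  (hu.fderiv_of_isOpen hs (by norm_num)).clm_apply (by fun_prop)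

theorem contDiffOn_gradNormSq {s : Set V} (hs : IsOpen s) (hu : ContDiffOn ℝ 2 u s)
    (b : OrthonormalBasis ι ℝ V) : ContDiffOn ℝ 1 (gradNormSq b u) s :=
  ContDiffOn.sum fun i _ ↦ (contDiffOn_fderiv_apply hs hu (b i)).norm_sq ℝ

theorem hasFDerivAt_fderiv_apply (hu : ContDiffAt ℝ 2 u y) (v : V) :
    HasFDerivAt (fun z ↦ fderiv ℝ u z v) ((fderiv ℝ (fderiv ℝ u) y).flip v) y := by
  have h := ((hu.fderiv_right (m := 1) le_rfl).differentiableAt one_ne_zero).hasFDerivAt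
  simpa using h.clm_apply (hasFDerivAt_const v y)

theorem hasFDerivAt_fderiv_sub_apply (hu : ContDiffAt ℝ 2 u y) (x : V) :
    HasFDerivAt (fun z ↦ fderiv ℝ u z (z - x))
      ((fderiv ℝ (fderiv ℝ u) y).flip (y - x) + fderiv ℝ u y) y := by
  have h := ((hu.fderiv_right (m := 1) le_rfl).differentiableAt one_ne_zero).hasFDerivAt
  simpa [add_comm] using h.clm_apply ((hasFDerivAt_id y).sub_const x)

theorem fderiv_gradNormSq_apply (hu : ContDiffAt ℝ 2 u y) (v : V) :
    fderiv ℝ (gradNormSq b u) y v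
      = 2 * ∑ i, ⟪fderiv ℝ u y (b i), fderiv ℝ (fderiv ℝ u) y v (b i)⟫ := by
  have h := HasFDerivAt.fun_sum (u := Finset.univ) fun i _ ↦
    (hasFDerivAt_fderiv_apply hu (b i)).norm_sq
  rw [show gradNormSq b u = fun z ↦ ∑ i, ‖fderiv ℝ u z (b i)‖ ^ 2 from rfl, h.fderiv]
  simp [Finset.mul_sum]

variable [FiniteDimensional ℝ V]

theorem laplacian_eq_sum_fderiv_fderiv (b : OrthonormalBasis ι ℝ V) (u : V → F) (y : V) :
    Laplacian.laplacian u y = ∑ i, fderiv ℝ (fderiv ℝ u) y (b i) (b i) := by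
  simp [laplacian_eq_iteratedFDeriv_orthonormalBasis u b, iteratedFDeriv_two_apply]

theorem sum_fderiv_inner_self_fderiv (b : OrthonormalBasis ι ℝ V) (hu : ContDiffAt ℝ 2 u y) :
    ∑ i, fderiv ℝ (fun z ↦ ⟪u z, fderiv ℝ u z (b i)⟫) y (b i)
      = gradNormSq b u y + ⟪u y, Laplacian.laplacian u y⟫ := by
  have hu' : HasFDerivAt u (fderiv ℝ u y) y := (hu.differentiableAt two_ne_zero).hasFDerivAt
  simp only [(hu'.inner ℝ (hasFDerivAt_fderiv_apply hu _)).fderiv]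
  simp [gradNormSq, laplacian_eq_sum_fderiv_fderiv b, inner_sum, Finset.sum_add_distrib, add_comm]

theorem sum_fderiv_inner_fderiv_sub_fderiv (b : OrthonormalBasis ι ℝ V)
    (hu : ContDiffAt ℝ 2 u y) (x : V) :
    ∑ i, fderiv ℝ (fun z ↦ ⟪fderiv ℝ u z (z - x), fderiv ℝ u z (b i)⟫) y (b i)
      = gradNormSq b u y + fderiv ℝ (gradNormSq b u) y (y - x) / 2
        + ⟪fderiv ℝ u y (y - x), Laplacian.laplacian u y⟫ := by
  have hsymm : IsSymmSndFDerivAt ℝ u y := hu.isSymmSndFDerivAt (by simp)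
  have hterm (i : ι) : fderiv ℝ (fun z ↦ ⟪fderiv ℝ u z (z - x), fderiv ℝ u z (b i)⟫) y (b i)
      = ‖fderiv ℝ u y (b i)‖ ^ 2
        + ⟪fderiv ℝ u y (b i), fderiv ℝ (fderiv ℝ u) y (y - x) (b i)⟫
        + ⟪fderiv ℝ u y (y - x), fderiv ℝ (fderiv ℝ u) y (b i) (b i)⟫ := by
    rw [((hasFDerivAt_fderiv_sub_apply hu x).inner ℝ (hasFDerivAt_fderiv_apply hu _)).fderiv,
      hsymm.eq (y - x), real_inner_comm (fderiv ℝ (fderiv ℝ u) y (b i) (y - x)),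
      ← real_inner_self_eq_norm_sq]
    simp [-map_sub, inner_add_left, add_comm]
  simp only [hterm, Finset.sum_add_distrib, fderiv_gradNormSq_apply hu,
    laplacian_eq_sum_fderiv_fderiv b, inner_sum, gradNormSq]
  ring

end Gradient

section Height

variable {V F : Type*} [NormedAddCommGroup V] [MeasureSpace V] [NormedAddCommGroup F]

/-- The smoothed height `H_φ(x, t)`. -/
def smoothedHeight (φ : ℝ → ℝ) (u : V → F) (x : V) (t : ℝ) : ℝ :=
  ∫ y, ‖u y‖ ^ 2 * radialWeight φ x t y

theorem IsRadialCutoff.smoothedHeight_nonneg {φ : ℝ → ℝ} (hφ : IsRadialCutoff φ) (u : V → F)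
    (x : V) (t : ℝ) : 0 ≤ smoothedHeight φ u x t :=
  integral_nonneg fun y ↦ mul_nonneg (sq_nonneg _) (hφ.radialWeight_nonneg x t y)

end Height

section Frequency

variable {V F ι : Type*} [NormedAddCommGroup V] [InnerProductSpace ℝ V] [MeasureSpace V]
  [NormedAddCommGroup F] [InnerProductSpace ℝ F] [Fintype ι]

/-- The smoothed Dirichlet energy `D_φ(x, t)`. -/
def smoothedEnergy (b : OrthonormalBasis ι ℝ V) (φ : ℝ → ℝ) (u : V → F) (x : V) (t : ℝ) : ℝ :=
  ∫ y, gradNormSq b u y * φ (‖y - x‖ / t)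

/-- Almgren's frequency function `N_φ(x, t) = t D_φ(x, t) / H_φ(x, t)`, with the junk value `0`
where the height vanishes. -/
def smoothedFrequency (b : OrthonormalBasis ι ℝ V) (φ : ℝ → ℝ) (u : V → F) (x : V) (t : ℝ) : ℝ :=
  t * smoothedEnergy b φ u x t / smoothedHeight φ u x t

/-- The weighted energy `E_φ(x, t)` of `u` in the direction `η = y - x`. Since `η` is not
normalized, it carries the same weight as the height. -/
def radialEnergy (φ : ℝ → ℝ) (u : V → F) (x : V) (t : ℝ) : ℝ :=
  ∫ y, ‖fderiv ℝ u y (y - x)‖ ^ 2 * radialWeight φ x t y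

/-- The weighted `L²` distance of `u` from being homogeneous of degree `N_φ(x, t)` about `x`. -/
def frequencyDefect (b : OrthonormalBasis ι ℝ V) (φ : ℝ → ℝ) (u : V → F) (x : V) (t : ℝ) : ℝ :=
  ∫ y, ‖fderiv ℝ u y (y - x) - smoothedFrequency b φ u x t • u y‖ ^ 2 * radialWeight φ x t y

variable {b : OrthonormalBasis ι ℝ V} {φ : ℝ → ℝ} {u : V → F} {x : V} {R t : ℝ}

namespace IsRadialCutoff

theorem smoothedEnergy_nonneg (hφ : IsRadialCutoff φ) (b : OrthonormalBasis ι ℝ V) (u : V → F)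
    (x : V) (t : ℝ) : 0 ≤ smoothedEnergy b φ u x t :=
  integral_nonneg fun y ↦ mul_nonneg (gradNormSq_nonneg b u y) (hφ.nonneg _)

theorem smoothedFrequency_nonneg (hφ : IsRadialCutoff φ) (b : OrthonormalBasis ι ℝ V) (u : V → F)
    (x : V) (ht : 0 ≤ t) : 0 ≤ smoothedFrequency b φ u x t :=
  div_nonneg (mul_nonneg ht (hφ.smoothedEnergy_nonneg b u x t)) (hφ.smoothedHeight_nonneg u x t)

theorem frequencyDefect_nonneg (hφ : IsRadialCutoff φ) (b : OrthonormalBasis ι ℝ V) (u : V → F)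
    (x : V) (t : ℝ) : 0 ≤ frequencyDefect b φ u x t :=
  integral_nonneg fun y ↦ mul_nonneg (sq_nonneg _) (hφ.radialWeight_nonneg x t y)

variable [FiniteDimensional ℝ V] [BorelSpace V] [(volume : Measure V).IsAddHaarMeasure]

theorem mul_smoothedEnergy_eq (hφ : IsRadialCutoff φ) (b : OrthonormalBasis ι ℝ V)
    (hu : HarmonicOnNhd u (ball x R)) (ht : 0 < t) (htR : t < R) :
    t * smoothedEnergy b φ u x t
      = ∫ y, ⟪u y, fderiv ℝ u y (y - x)⟫ * radialWeight φ x t y := by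
  have hfield (i : ι) : ContDiffOn ℝ 1 (fun y ↦ ⟪u y, fderiv ℝ u y (b i)⟫) (ball x R) :=
    (hu.contDiffOn.of_le one_le_two).inner ℝ (contDiffOn_fderiv_apply isOpen_ball hu.contDiffOn _)
  have hdiv : EqOn (gradNormSq b u)
      (fun y ↦ ∑ i, fderiv ℝ (fun z ↦ ⟪u z, fderiv ℝ u z (b i)⟫) y (b i)) (ball x R) := by
    intro y hy
    simp [sum_fderiv_inner_self_fderiv b (hu y hy).1, (hu y hy).2.self_of_nhds]
  rw [smoothedEnergy, integral_mul_congr_of_support_subset hdiv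
    ((hφ.support_comp_norm_subset x ht).trans (closedBall_subset_ball htR)),
    hφ.integral_sum_fderiv_mul_comp_norm b hfield ht htR, mul_inv_cancel_left₀ ht.ne']
  simp only [sum_inner_fderiv_mul_inner]

theorem integral_fderiv_norm_sq_mul_radialWeight (hφ : IsRadialCutoff φ)
    (b : OrthonormalBasis ι ℝ V) (hu : HarmonicOnNhd u (ball x R)) (ht : 0 < t) (htR : t < R) :
    ∫ y, fderiv ℝ (fun z ↦ ‖u z‖ ^ 2) y (y - x) * radialWeight φ x t y
      = 2 * (t * smoothedEnergy b φ u x t) := by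
  have hderiv : EqOn (fun y ↦ fderiv ℝ (fun z ↦ ‖u z‖ ^ 2) y (y - x))
      (fun y ↦ 2 * ⟪u y, fderiv ℝ u y (y - x)⟫) (ball x R) := by
    intro y hy
    have hdiff : DifferentiableAt ℝ u y := (hu y hy).1.differentiableAt two_ne_zero
    simp [hdiff.hasFDerivAt.norm_sq.fderiv]
  rw [integral_mul_congr_of_support_subset hderiv
    ((hφ.support_radialWeight_subset x ht).trans (closedBall_subset_ball htR)),
    hφ.mul_smoothedEnergy_eq b hu ht htR, ← integral_const_mul]
  simp only [mul_assoc]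

theorem hasDerivAt_smoothedHeight (hφ : IsRadialCutoff φ) (b : OrthonormalBasis ι ℝ V)
    (hu : HarmonicOnNhd u (ball x R)) (ht : 0 < t) (htR : t < R) :
    HasDerivAt (smoothedHeight φ u x)
      ((finrank ℝ V - 1) / t * smoothedHeight φ u x t + 2 * smoothedEnergy b φ u x t) t := by
  have hscale {f : V → ℝ} {s : ℝ} (hs : 0 < s) : ∫ y, f y * radialWeight φ x s y
      = s⁻¹ * ∫ y, f y * radialWeight φ 0 1 (s⁻¹ • (y - x)) := by
    simp only [radialWeight_eq_inv_mul_comp_smul φ x _ hs, mul_left_comm _ s⁻¹,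
      integral_const_mul]
  have hmain := (hasDerivAt_inv ht.ne').mul (hasDerivAt_integral_mul_comp_inv_smul_sub
    (μ := volume) ((hu.contDiffOn.of_le one_le_two).norm_sq ℝ)
    hφ.continuous_radialWeight_zero_one (hφ.support_radialWeight_subset 0 one_pos) ht htR)
  refine (hmain.congr_of_eventuallyEq ?_).congr_deriv ?_
  · filter_upwards [eventually_gt_nhds ht] with s hs using hscale hs
  · have hderiv := hφ.integral_fderiv_norm_sq_mul_radialWeight b hu ht htR
    rw [hscale ht, inv_mul_eq_iff_eq_mul₀ ht.ne'] at hderiv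
    rw [hderiv, smoothedHeight, hscale ht]
    field_simp
    ring

theorem integral_fderiv_gradNormSq_mul_comp_norm (hφ : IsRadialCutoff φ)
    (b : OrthonormalBasis ι ℝ V) (hu : HarmonicOnNhd u (ball x R)) (ht : 0 < t) (htR : t < R) :
    ∫ y, fderiv ℝ (gradNormSq b u) y (y - x) * φ (‖y - x‖ / t)
      = 2 / t * radialEnergy φ u x t - 2 * smoothedEnergy b φ u x t := by
  have hgrad : ContDiffOn ℝ 1 (gradNormSq b u) (ball x R) :=
    contDiffOn_gradNormSq isOpen_ball hu.contDiffOn b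
  have hgrad' : ContinuousOn (fun y ↦ fderiv ℝ (gradNormSq b u) y (y - x)) (ball x R) :=
    (hgrad.continuousOn_fderiv_of_isOpen isOpen_ball le_rfl).clm_apply (by fun_prop)
  have hfield (i : ι) :
      ContDiffOn ℝ 1 (fun y ↦ ⟪fderiv ℝ u y (y - x), fderiv ℝ u y (b i)⟫) (ball x R) :=
    (contDiffOn_fderiv_sub_apply isOpen_ball hu.contDiffOn x).inner ℝ
      (contDiffOn_fderiv_apply isOpen_ball hu.contDiffOn _)
  have hdiv : EqOn
      (fun y ↦ ∑ i, fderiv ℝ (fun z ↦ ⟪fderiv ℝ u z (z - x), fderiv ℝ u z (b i)⟫) y (b i))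
      (fun y ↦ gradNormSq b u y + fderiv ℝ (gradNormSq b u) y (y - x) / 2) (ball x R) := by
    intro y hy
    simp [-map_sub, sum_fderiv_inner_fderiv_sub_fderiv b (hu y hy).1, (hu y hy).2.self_of_nhds]
  have hparts := hφ.integral_sum_fderiv_mul_comp_norm (μ := volume) b hfield ht htR
  simp only [sum_inner_fderiv_mul_inner, real_inner_self_eq_norm_sq] at hparts
  rw [integral_mul_congr_of_support_subset hdiv
    ((hφ.support_comp_norm_subset x ht).trans (closedBall_subset_ball htR))] at hparts
  simp only [add_mul, div_mul_eq_mul_div] at hparts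
  rw [integral_add (hφ.integrable_mul_comp_norm hgrad.continuousOn ht htR)
    ((hφ.integrable_mul_comp_norm hgrad' ht htR).div_const 2), integral_div] at hparts
  rw [radialEnergy, smoothedEnergy, div_eq_mul_inv]
  linarith

theorem hasDerivAt_smoothedEnergy (hφ : IsRadialCutoff φ) (b : OrthonormalBasis ι ℝ V)
    (hu : HarmonicOnNhd u (ball x R)) (ht : 0 < t) (htR : t < R) :
    HasDerivAt (smoothedEnergy b φ u x)
      ((finrank ℝ V - 2) / t * smoothedEnergy b φ u x t + 2 / t ^ 2 * radialEnergy φ u x t) t := by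
  have hnorm {s : ℝ} (hs : 0 < s) (y : V) : ‖s⁻¹ • (y - x)‖ = ‖y - x‖ / s := by
    rw [norm_smul, Real.norm_of_nonneg (by positivity), inv_mul_eq_div]
  have hmain := hasDerivAt_integral_mul_comp_inv_smul_sub (μ := volume) (κ := fun z ↦ φ ‖z‖)
    (contDiffOn_gradNormSq isOpen_ball hu.contDiffOn b)
    (hφ.contDiff.continuous.comp continuous_norm)
    (by simpa using hφ.support_comp_norm_subset (0 : V) one_pos) ht htR
  refine (hmain.congr_of_eventuallyEq ?_).congr_deriv ?_
  · filter_upwards [eventually_gt_nhds ht] with s hs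
    simp only [hnorm hs, smoothedEnergy]
  · simp only [hnorm ht]
    rw [hφ.integral_fderiv_gradNormSq_mul_comp_norm b hu ht htR, ← smoothedEnergy]
    field_simp
    ring

theorem integral_norm_fderiv_sub_smul_sq_mul_radialWeight (hφ : IsRadialCutoff φ)
    (b : OrthonormalBasis ι ℝ V) (hu : HarmonicOnNhd u (ball x R)) (ht : 0 < t) (htR : t < R)
    (c : ℝ) :
    ∫ y, ‖fderiv ℝ u y (y - x) - c • u y‖ ^ 2 * radialWeight φ x t y
      = radialEnergy φ u x t - 2 * c * (t * smoothedEnergy b φ u x t)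
        + c ^ 2 * smoothedHeight φ u x t := by
  have hη : ContinuousOn (fun y ↦ fderiv ℝ u y (y - x)) (ball x R) :=
    (contDiffOn_fderiv_sub_apply isOpen_ball hu.contDiffOn x).continuousOn
  have hexpand (y : V) : ‖fderiv ℝ u y (y - x) - c • u y‖ ^ 2 * radialWeight φ x t y
      = ‖fderiv ℝ u y (y - x)‖ ^ 2 * radialWeight φ x t y
        + -(2 * c) * (⟪u y, fderiv ℝ u y (y - x)⟫ * radialWeight φ x t y)
        + c ^ 2 * (‖u y‖ ^ 2 * radialWeight φ x t y) := by
    rw [norm_sub_sq_real, inner_smul_right, real_inner_comm, norm_smul, mul_pow, Real.norm_eq_abs,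
      sq_abs]
    ring
  have hint₁ := hφ.integrable_mul_radialWeight (μ := volume)
    (f := fun y ↦ ‖fderiv ℝ u y (y - x)‖ ^ 2) (hη.norm.pow 2) ht htR
  have hint₂ := hφ.integrable_mul_radialWeight (μ := volume) (hu.continuousOn.inner hη) ht htR
  have hint₃ := hφ.integrable_mul_radialWeight (μ := volume)
    (f := fun y ↦ ‖u y‖ ^ 2) (hu.continuousOn.norm.pow 2) ht htR
  simp only [hexpand]
  rw [integral_add (hint₁.fun_add (hint₂.const_mul _)) (hint₃.const_mul _),
    integral_add hint₁ (hint₂.const_mul _), integral_const_mul, integral_const_mul,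
    ← hφ.mul_smoothedEnergy_eq b hu ht htR, ← radialEnergy, ← smoothedHeight]
  ring

theorem frequencyDefect_eq (hφ : IsRadialCutoff φ) (b : OrthonormalBasis ι ℝ V)
    (hu : HarmonicOnNhd u (ball x R)) (ht : 0 < t) (htR : t < R)
    (hH : smoothedHeight φ u x t ≠ 0) :
    frequencyDefect b φ u x t
      = radialEnergy φ u x t - smoothedFrequency b φ u x t ^ 2 * smoothedHeight φ u x t := by
  have hN : t * smoothedEnergy b φ u x t
      = smoothedFrequency b φ u x t * smoothedHeight φ u x t := (div_mul_cancel₀ _ hH).symm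
  rw [frequencyDefect, hφ.integral_norm_fderiv_sub_smul_sq_mul_radialWeight b hu ht htR, hN]
  ring

theorem hasDerivAt_smoothedFrequency (hφ : IsRadialCutoff φ) (b : OrthonormalBasis ι ℝ V)
    (hu : HarmonicOnNhd u (ball x R)) (ht : 0 < t) (htR : t < R)
    (hH : smoothedHeight φ u x t ≠ 0) :
    HasDerivAt (smoothedFrequency b φ u x)
      (2 / (t * smoothedHeight φ u x t) * frequencyDefect b φ u x t) t := by
  refine (((hasDerivAt_id t).mul (hφ.hasDerivAt_smoothedEnergy b hu ht htR)).div
    (hφ.hasDerivAt_smoothedHeight b hu ht htR) hH).congr_deriv ?_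
  rw [hφ.frequencyDefect_eq b hu ht htR hH, smoothedFrequency]
  simp only [id_eq, Pi.mul_apply]
  field_simp
  ring

end IsRadialCutoff

end Frequency

section Fubini

variable {X : Type*} [TopologicalSpace X] [T2Space X] [SecondCountableTopology X]
  [MeasurableSpace X] [BorelSpace X] {μ : Measure X} [IsFiniteMeasureOnCompacts μ] [SFinite μ]
  {a b : ℝ} {K : Set X} {F : ℝ → X → ℝ}

theorem integrable_uncurry_prod_restrict_of_continuousOn (hK : IsCompact K)
    (hF : ContinuousOn (Function.uncurry F) (Icc a b ×ˢ K)) :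
    Integrable (Function.uncurry F) ((volume.restrict (Ioc a b)).prod (μ.restrict K)) := by
  rw [Measure.prod_restrict]
  exact (hF.integrableOn_compact (isCompact_Icc.prod hK)).mono_set
    (prod_mono_left Ioc_subset_Icc_self)

theorem setIntegral_le_intervalIntegral_setIntegral {A : Set X} {f : X → ℝ} (hab : a ≤ b)
    (hK : IsCompact K) (hF : ContinuousOn (Function.uncurry F) (Icc a b ×ˢ K))
    (hF0 : ∀ t ∈ Icc a b, ∀ y, 0 ≤ F t y) (hA : MeasurableSet A) (hAK : A ⊆ K)
    (hf0 : ∀ y, 0 ≤ f y) (hf : ∀ y ∈ A, f y ≤ ∫ t in a..b, F t y) :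
    ∫ y in A, f y ∂μ ≤ ∫ t in a..b, ∫ y in K, F t y ∂μ := by
  have hint := integrable_uncurry_prod_restrict_of_continuousOn (μ := μ) hK hF
  rw [← uIoc_of_le hab] at hint
  have hintK : IntegrableOn (fun y ↦ ∫ t in a..b, F t y) K μ := by
    simpa only [IntegrableOn, intervalIntegral.integral_of_le hab, uIoc_of_le hab,
      Function.uncurry_apply_pair] using hint.integral_prod_right
  calc ∫ y in A, f y ∂μ
      ≤ ∫ y in A, (∫ t in a..b, F t y) ∂μ :=
        integral_mono_of_nonneg (.of_forall hf0) (hintK.mono_set hAK)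
          ((ae_restrict_iff' hA).2 <| .of_forall hf)
    _ ≤ ∫ y in K, (∫ t in a..b, F t y) ∂μ :=
        setIntegral_mono_set hintK
          (.of_forall fun y ↦ intervalIntegral.integral_nonneg hab fun t ht ↦ hF0 t ht y)
          hAK.eventuallyLE
    _ = ∫ t in a..b, ∫ y in K, F t y ∂μ := (intervalIntegral_integral_swap hint).symm

end Fubini

section Growth

variable {V F ι : Type*} [NormedAddCommGroup V] [InnerProductSpace ℝ V] [FiniteDimensional ℝ V]
  [MeasureSpace V] [BorelSpace V] [(volume : Measure V).IsAddHaarMeasure]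
  [NormedAddCommGroup F] [InnerProductSpace ℝ F] [Fintype ι]
  {b : OrthonormalBasis ι ℝ V} {φ : ℝ → ℝ} {u : V → F} {x : V} {R s t Λ : ℝ}

namespace IsRadialCutoff

theorem monotoneOn_smoothedHeight [Nontrivial V] (hφ : IsRadialCutoff φ)
    (b : OrthonormalBasis ι ℝ V) (hu : HarmonicOnNhd u (ball x R)) :
    MonotoneOn (smoothedHeight φ u x) (Ioo 0 R) := by
  have hderiv (t) (ht : t ∈ Ioo 0 R) := hφ.hasDerivAt_smoothedHeight b hu ht.1 ht.2
  have hdim : (1 : ℝ) ≤ finrank ℝ V := by exact_mod_cast finrank_pos (R := ℝ) (M := V)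
  refine monotoneOn_of_hasDerivWithinAt_nonneg (convex_Ioo 0 R) (HasDerivAt.continuousOn hderiv)
    (fun t ht ↦ (hderiv t (interior_subset ht)).hasDerivWithinAt) fun t ht ↦ ?_
  have ht' : 0 ≤ t := (interior_subset ht : t ∈ Ioo 0 R).1.le
  have hD := hφ.smoothedEnergy_nonneg b u x t
  exact add_nonneg (mul_nonneg (div_nonneg (sub_nonneg.2 hdim) ht')
    (hφ.smoothedHeight_nonneg u x t)) (by positivity)

theorem smoothedHeight_pos_of_le [Nontrivial V] (hφ : IsRadialCutoff φ)
    (b : OrthonormalBasis ι ℝ V) (hu : HarmonicOnNhd u (ball x R)) (hs : 0 < s) (hst : s ≤ t)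
    (htR : t < R) (hH : 0 < smoothedHeight φ u x s) : 0 < smoothedHeight φ u x t :=
  hH.trans_le (hφ.monotoneOn_smoothedHeight b hu ⟨hs, hst.trans_lt htR⟩ ⟨hs.trans_le hst, htR⟩ hst)

theorem deriv_smoothedFrequency_nonneg (hφ : IsRadialCutoff φ) (b : OrthonormalBasis ι ℝ V)
    (hu : HarmonicOnNhd u (ball x R)) (ht : 0 < t) (htR : t < R)
    (hH : 0 < smoothedHeight φ u x t) : 0 ≤ deriv (smoothedFrequency b φ u x) t := by
  rw [(hφ.hasDerivAt_smoothedFrequency b hu ht htR hH.ne').deriv]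
  exact mul_nonneg (by positivity) (hφ.frequencyDefect_nonneg b u x t)

theorem differentiableAt_smoothedFrequency [Nontrivial V] (hφ : IsRadialCutoff φ)
    (b : OrthonormalBasis ι ℝ V) (hu : HarmonicOnNhd u (ball x R)) (hs : 0 < s)
    (hH : 0 < smoothedHeight φ u x s) (ht : t ∈ Ico s R) :
    DifferentiableAt ℝ (smoothedFrequency b φ u x) t :=
  (hφ.hasDerivAt_smoothedFrequency b hu (hs.trans_le ht.1) ht.2
    (hφ.smoothedHeight_pos_of_le b hu hs ht.1 ht.2 hH).ne').differentiableAt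

theorem continuousOn_smoothedFrequency [Nontrivial V] (hφ : IsRadialCutoff φ)
    (b : OrthonormalBasis ι ℝ V) (hu : HarmonicOnNhd u (ball x R)) (hs : 0 < s)
    (hH : 0 < smoothedHeight φ u x s) : ContinuousOn (smoothedFrequency b φ u x) (Ico s R) :=
  fun _ ht ↦ (hφ.differentiableAt_smoothedFrequency b hu hs hH ht).continuousAt.continuousWithinAt

theorem monotoneOn_smoothedFrequency [Nontrivial V] (hφ : IsRadialCutoff φ)
    (b : OrthonormalBasis ι ℝ V) (hu : HarmonicOnNhd u (ball x R)) (hs : 0 < s)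
    (hH : 0 < smoothedHeight φ u x s) :
    MonotoneOn (smoothedFrequency b φ u x) (Ico s R) := by
  refine monotoneOn_of_deriv_nonneg (convex_Ico s R)
    (hφ.continuousOn_smoothedFrequency b hu hs hH) (fun t ht ↦ ?_) fun t ht ↦ ?_
  · exact (hφ.differentiableAt_smoothedFrequency b hu hs hH
      (interior_subset ht)).differentiableWithinAt
  · obtain ⟨hst, htR⟩ : t ∈ Ico s R := interior_subset ht
    exact hφ.deriv_smoothedFrequency_nonneg b hu (hs.trans_le hst) htR
      (hφ.smoothedHeight_pos_of_le b hu hs hst htR hH)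

theorem abs_smoothedFrequency_sub_le [Nontrivial V] (hφ : IsRadialCutoff φ)
    (b : OrthonormalBasis ι ℝ V) (hu : HarmonicOnNhd u (ball x R)) (hs : 0 < s)
    (hH : 0 < smoothedHeight φ u x s) (htR : t < R) {ρ τ : ℝ} (hρ : ρ ∈ Icc s t)
    (hτ : τ ∈ Icc s t) :
    |smoothedFrequency b φ u x τ - smoothedFrequency b φ u x ρ|
      ≤ smoothedFrequency b φ u x t - smoothedFrequency b φ u x s := by
  have hst : s ≤ t := hρ.1.trans hρ.2
  have hmono := (hφ.monotoneOn_smoothedFrequency b hu hs hH).mono (Icc_subset_Ico_right htR)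
  exact abs_sub_le_of_le_of_le (hmono (left_mem_Icc.2 hst) hτ hτ.1)
    (hmono hτ (right_mem_Icc.2 hst) hτ.2) (hmono (left_mem_Icc.2 hst) hρ hρ.1)
    (hmono hρ (right_mem_Icc.2 hst) hρ.2)

theorem antitoneOn_rpow_mul_smoothedHeight [Nontrivial V] (hφ : IsRadialCutoff φ)
    (b : OrthonormalBasis ι ℝ V) (hu : HarmonicOnNhd u (ball x R)) (hs : 0 < s)
    (htR : t < R) (hH : 0 < smoothedHeight φ u x s) (hN : smoothedFrequency b φ u x t ≤ Λ) :
    AntitoneOn (fun τ ↦ τ ^ (-(finrank ℝ V - 1 + 2 * Λ)) * smoothedHeight φ u x τ) (Icc s t) := by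
  set k : ℝ := finrank ℝ V - 1 + 2 * Λ with hk
  have hpos {τ} (hτ : τ ∈ Icc s t) : 0 < τ := hs.trans_le hτ.1
  have hderiv (τ) (hτ : τ ∈ Icc s t) := (Real.hasDerivAt_rpow_const (p := -k)
    (.inl (hpos hτ).ne')).mul
    (hφ.hasDerivAt_smoothedHeight b hu (hpos hτ) (hτ.2.trans_lt htR))
  refine antitoneOn_of_hasDerivWithinAt_nonpos (convex_Icc s t) (HasDerivAt.continuousOn hderiv)
    (fun τ hτ ↦ (hderiv τ (interior_subset hτ)).hasDerivWithinAt) fun τ hτ ↦ ?_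
  replace hτ : τ ∈ Icc s t := interior_subset hτ
  have hτ0 := hpos hτ
  have hHτ := hφ.smoothedHeight_pos_of_le b hu hs hτ.1 (hτ.2.trans_lt htR) hH
  have hNτ : τ * smoothedEnergy b φ u x τ ≤ Λ * smoothedHeight φ u x τ :=
    (div_le_iff₀ hHτ).1 <| (hφ.monotoneOn_smoothedFrequency b hu hs hH
      ⟨hτ.1, hτ.2.trans_lt htR⟩ ⟨hτ.1.trans hτ.2, htR⟩ hτ.2).trans hN
  calc -k * τ ^ (-k - 1) * smoothedHeight φ u x τ + τ ^ (-k) *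
        ((finrank ℝ V - 1) / τ * smoothedHeight φ u x τ + 2 * smoothedEnergy b φ u x τ)
      = 2 * τ ^ (-k - 1) * (τ * smoothedEnergy b φ u x τ - Λ * smoothedHeight φ u x τ) := by
        rw [Real.rpow_sub_one hτ0.ne', hk]
        field_simp
        ring
    _ ≤ 0 := mul_nonpos_of_nonneg_of_nonpos (by positivity) (sub_nonpos.2 hNτ)

theorem smoothedHeight_le_rpow_mul [Nontrivial V] (hφ : IsRadialCutoff φ)
    (b : OrthonormalBasis ι ℝ V) (hu : HarmonicOnNhd u (ball x R)) (hs : 0 < s) (hst : s ≤ t)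
    (htR : t < R) (hH : 0 < smoothedHeight φ u x s) (hN : smoothedFrequency b φ u x t ≤ Λ) :
    smoothedHeight φ u x t ≤ (t / s) ^ (finrank ℝ V - 1 + 2 * Λ) * smoothedHeight φ u x s := by
  have ht : 0 < t := hs.trans_le hst
  have hcompare := hφ.antitoneOn_rpow_mul_smoothedHeight b hu hs htR hH hN
    (left_mem_Icc.2 hst) (right_mem_Icc.2 hst) hst
  simp only [Real.rpow_neg hs.le, Real.rpow_neg ht.le, inv_mul_eq_div] at hcompare
  rw [div_le_iff₀ (by positivity)] at hcompare
  rw [Real.div_rpow ht.le hs.le]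
  exact hcompare.trans_eq (by ring)

end IsRadialCutoff

end Growth

section ScaleAverage

variable {V : Type*} [NormedAddCommGroup V] {φ : ℝ → ℝ} {x y : V} {a b t : ℝ}

namespace IsRadialCutoff

theorem hasDerivAt_comp_norm_div (hφ : IsRadialCutoff φ) (x y : V) (ht : t ≠ 0) :
    HasDerivAt (fun s ↦ φ (‖y - x‖ / s)) ((‖y - x‖ / t) ^ 2 * radialWeight φ x t y) t := by
  have hdiv := (hasDerivAt_inv ht).const_mul ‖y - x‖
  refine ((hφ.hasDerivAt _).comp t hdiv).congr_deriv ?_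
  rcases eq_or_ne ‖y - x‖ 0 with hy | hy
  · simp [hy]
  · rw [radialWeight, ← div_eq_mul_inv]
    field_simp

theorem sq_mul_radialWeight_le (hφ : IsRadialCutoff φ) (x y : V) (ht : 0 < t) :
    (‖y - x‖ / t) ^ 2 * radialWeight φ x t y ≤ radialWeight φ x t y := by
  rcases le_total t ‖y - x‖ with hty | hyt
  · simp [hφ.radialWeight_eq_zero_of_le_norm ht hty]
  · exact mul_le_of_le_one_left (hφ.radialWeight_nonneg x t y)
      (pow_le_one₀ (by positivity) ((div_le_one ht).2 hyt))

theorem continuousOn_radialWeight_scale [NormedSpace ℝ V] (hφ : IsRadialCutoff φ) (x y : V)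
    (ha : 0 < a) : ContinuousOn (fun t ↦ radialWeight φ x t y) (Icc a b) :=
  (hφ.continuousOn_radialWeight x).comp (f := fun t ↦ (t, y)) (by fun_prop)
    fun _ ht ↦ ⟨ha.trans_le ht.1, mem_univ y⟩

theorem one_le_intervalIntegral_radialWeight [NormedSpace ℝ V] (hφ : IsRadialCutoff φ)
    (ha : 0 < a) (hab : a ≤ b) (hay : a ≤ ‖y - x‖) (hyb : ‖y - x‖ ≤ 3 / 4 * b) :
    1 ≤ ∫ t in a..b, radialWeight φ x t y := by
  have hpos {t} (ht : t ∈ Icc a b) : 0 < t := ha.trans_le ht.1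
  have hderiv (t) (ht : t ∈ Icc a b) := hφ.hasDerivAt_comp_norm_div x y (hpos ht).ne'
  calc (1 : ℝ) = φ (‖y - x‖ / b) - φ (‖y - x‖ / a) := by
        rw [hφ.eq_one _ ((div_le_iff₀ (ha.trans_le hab)).2 hyb),
          hφ.eq_zero _ ((one_le_div ha).2 hay), sub_zero]
    _ ≤ ∫ t in a..b, radialWeight φ x t y :=
        intervalIntegral.sub_le_integral_of_hasDeriv_right_of_le hab
          (HasDerivAt.continuousOn hderiv)
          (fun t ht ↦ (hderiv t (Ioo_subset_Icc_self ht)).hasDerivWithinAt)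
          ((hφ.continuousOn_radialWeight_scale x y ha).integrableOn_compact isCompact_Icc)
          fun t ht ↦ hφ.sq_mul_radialWeight_le x y (hpos (Ioo_subset_Icc_self ht))

end IsRadialCutoff

end ScaleAverage

theorem norm_sub_smul_sq_le {F : Type*} [NormedAddCommGroup F] [NormedSpace ℝ F] {c c' δ : ℝ}
    (hδ : |c - c'| ≤ δ) (v w : F) :
    ‖v - c' • w‖ ^ 2 ≤ 2 * ‖v - c • w‖ ^ 2 + 2 * δ ^ 2 * ‖w‖ ^ 2 := by
  calc ‖v - c' • w‖ ^ 2 = ‖(v - c • w) + (c - c') • w‖ ^ 2 := by rw [sub_smul]; abel_nf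
    _ ≤ (‖v - c • w‖ + δ * ‖w‖) ^ 2 := by
        gcongr
        refine (norm_add_le _ _).trans ?_
        rw [norm_smul, Real.norm_eq_abs]
        gcongr
    _ ≤ 2 * (‖v - c • w‖ ^ 2 + (δ * ‖w‖) ^ 2) := add_sq_le
    _ = 2 * ‖v - c • w‖ ^ 2 + 2 * δ ^ 2 * ‖w‖ ^ 2 := by ring

section Pinching

variable {V F ι : Type*} [NormedAddCommGroup V] [InnerProductSpace ℝ V] [MeasureSpace V]
  [NormedAddCommGroup F] [InnerProductSpace ℝ F] [Fintype ι]

/-- The weighted density of `2 ∫ |∂_η u - N_φ(x, t) u|² + 2 δ² H_φ(x, t)`. Integrated over the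
scales `t`, it dominates `|∂_η u - N_φ(x, |y - x|) u|²` as soon as `N_φ(x, ·)` varies by at most
`δ`. -/
def pinchingDensity (b : OrthonormalBasis ι ℝ V) (φ : ℝ → ℝ) (u : V → F) (x : V) (δ t : ℝ)
    (y : V) : ℝ :=
  (2 * ‖fderiv ℝ u y (y - x) - smoothedFrequency b φ u x t • u y‖ ^ 2 + 2 * δ ^ 2 * ‖u y‖ ^ 2) *
    radialWeight φ x t y

variable {b : OrthonormalBasis ι ℝ V} {φ : ℝ → ℝ} {u : V → F} {x y : V} {A : Set V}
  {R s t δ : ℝ}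

namespace IsRadialCutoff

theorem pinchingDensity_nonneg (hφ : IsRadialCutoff φ) (b : OrthonormalBasis ι ℝ V) (u : V → F)
    (x : V) (δ t : ℝ) (y : V) : 0 ≤ pinchingDensity b φ u x δ t y :=
  mul_nonneg (by positivity) (hφ.radialWeight_nonneg x t y)

theorem continuousOn_pinchingDensity (hφ : IsRadialCutoff φ) (hu : ContDiffOn ℝ 2 u (ball x R))
    (hs : 0 < s) (hN : ContinuousOn (smoothedFrequency b φ u x) (Icc s t)) (δ : ℝ) :
    ContinuousOn (Function.uncurry (pinchingDensity b φ u x δ)) (Icc s t ×ˢ ball x R) := by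
  have hη : ContinuousOn (fun y ↦ fderiv ℝ u y (y - x)) (ball x R) :=
    (contDiffOn_fderiv_sub_apply isOpen_ball hu x).continuousOn
  have hη' := hη.comp (s := Icc s t ×ˢ ball x R) continuousOn_snd fun p hp ↦ hp.2
  have hu' := hu.continuousOn.comp (s := Icc s t ×ˢ ball x R) continuousOn_snd fun p hp ↦ hp.2
  have hN' := hN.comp (s := Icc s t ×ˢ ball x R) continuousOn_fst fun p hp ↦ hp.1
  have hw := (hφ.continuousOn_radialWeight x).mono
    (prod_mono (t₁ := ball x R) (fun τ hτ ↦ hs.trans_le hτ.1 : Icc s t ⊆ Ioi 0) (subset_univ _))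
  exact (((((hη'.sub (hN'.smul hu')).norm.pow 2).const_mul 2)).add
    ((hu'.norm.pow 2).const_mul _)).mul hw

theorem norm_fderiv_sub_smul_sq_le_intervalIntegral (hφ : IsRadialCutoff φ)
    (hu : ContDiffOn ℝ 2 u (ball x R)) (hN : ContinuousOn (smoothedFrequency b φ u x) (Icc s t))
    (hs : 0 < s) (hst : s ≤ t) (htR : t ≤ R) (hsy : s ≤ ‖y - x‖) (hyt : ‖y - x‖ ≤ 3 / 4 * t)
    (hδ : ∀ τ ∈ Icc s t,
      |smoothedFrequency b φ u x τ - smoothedFrequency b φ u x ‖y - x‖| ≤ δ) :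
    ‖fderiv ℝ u y (y - x) - smoothedFrequency b φ u x ‖y - x‖ • u y‖ ^ 2
      ≤ ∫ τ in s..t, pinchingDensity b φ u x δ τ y := by
  have hy : y ∈ ball x R := mem_ball_iff_norm.2 (by linarith)
  have hdensity : ContinuousOn (fun τ ↦ pinchingDensity b φ u x δ τ y) (Icc s t) :=
    (hφ.continuousOn_pinchingDensity hu hs hN δ).comp (f := fun τ ↦ (τ, y)) (by fun_prop)
      fun τ hτ ↦ ⟨hτ, hy⟩
  have hweight := hφ.continuousOn_radialWeight_scale (b := t) x y hs
  rw [← uIcc_of_le hst] at hdensity hweight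
  calc ‖fderiv ℝ u y (y - x) - smoothedFrequency b φ u x ‖y - x‖ • u y‖ ^ 2
      ≤ ‖fderiv ℝ u y (y - x) - smoothedFrequency b φ u x ‖y - x‖ • u y‖ ^ 2
          * ∫ τ in s..t, radialWeight φ x τ y :=
        le_mul_of_one_le_right (sq_nonneg _)
          (hφ.one_le_intervalIntegral_radialWeight hs hst hsy hyt)
    _ = ∫ τ in s..t, ‖fderiv ℝ u y (y - x) - smoothedFrequency b φ u x ‖y - x‖ • u y‖ ^ 2
          * radialWeight φ x τ y := (intervalIntegral.integral_const_mul _ _).symm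
    _ ≤ ∫ τ in s..t, pinchingDensity b φ u x δ τ y :=
        intervalIntegral.integral_mono_on hst (hweight.intervalIntegrable.const_mul _)
          hdensity.intervalIntegrable fun τ hτ ↦ mul_le_mul_of_nonneg_right
            (norm_sub_smul_sq_le (hδ τ hτ) _ _) (hφ.radialWeight_nonneg x τ y)

variable [FiniteDimensional ℝ V] [BorelSpace V] [(volume : Measure V).IsAddHaarMeasure]

theorem setIntegral_pinchingDensity (hφ : IsRadialCutoff φ) (hu : ContDiffOn ℝ 2 u (ball x R))
    (ht : 0 < t) (hts : t ≤ s) (hsR : s < R) (δ : ℝ) :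
    ∫ y in closedBall x s, pinchingDensity b φ u x δ t y
      = 2 * frequencyDefect b φ u x t + 2 * δ ^ 2 * smoothedHeight φ u x t := by
  have hη : ContinuousOn (fun y ↦ fderiv ℝ u y (y - x)) (ball x R) :=
    (contDiffOn_fderiv_sub_apply isOpen_ball hu x).continuousOn
  have hdefect := hφ.integrable_mul_radialWeight (μ := volume)
    (f := fun y ↦ ‖fderiv ℝ u y (y - x) - smoothedFrequency b φ u x t • u y‖ ^ 2)
    ((hη.sub (hu.continuousOn.const_smul _)).norm.pow 2) ht (hts.trans_lt hsR)
  have hheight := hφ.integrable_mul_radialWeight (μ := volume)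
    (f := fun y ↦ ‖u y‖ ^ 2) (hu.continuousOn.norm.pow 2) ht (hts.trans_lt hsR)
  rw [setIntegral_eq_integral_of_forall_compl_eq_zero fun y hy ↦ ?_]
  · simp only [pinchingDensity, add_mul, mul_assoc (2 : ℝ), mul_assoc (δ ^ 2)]
    rw [integral_add (hdefect.const_mul 2) ((hheight.const_mul _).const_mul 2)]
    simp only [integral_const_mul, frequencyDefect, smoothedHeight]
  · rw [mem_closedBall_iff_norm, not_le] at hy
    rw [pinchingDensity, hφ.radialWeight_eq_zero_of_le_norm ht (hts.trans hy.le), mul_zero]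

theorem two_mul_frequencyDefect_add_le [Nontrivial V] (hφ : IsRadialCutoff φ)
    (b : OrthonormalBasis ι ℝ V) (hu : HarmonicOnNhd u (ball x R)) (hs : 0 < s) (hst : s ≤ t)
    (htR : t < R) (hH : 0 < smoothedHeight φ u x s) (δ : ℝ) :
    2 * frequencyDefect b φ u x s + 2 * δ ^ 2 * smoothedHeight φ u x s
      ≤ smoothedHeight φ u x t * (t * deriv (smoothedFrequency b φ u x) s + 2 * δ ^ 2) := by
  have hderiv := (hφ.hasDerivAt_smoothedFrequency b hu hs (hst.trans_lt htR) hH.ne').deriv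
  have hderiv_nonneg := hφ.deriv_smoothedFrequency_nonneg b hu hs (hst.trans_lt htR) hH
  have hmono : smoothedHeight φ u x s ≤ smoothedHeight φ u x t :=
    hφ.monotoneOn_smoothedHeight b hu ⟨hs, hst.trans_lt htR⟩ ⟨hs.trans_le hst, htR⟩ hst
  calc 2 * frequencyDefect b φ u x s + 2 * δ ^ 2 * smoothedHeight φ u x s
      = smoothedHeight φ u x s * (s * deriv (smoothedFrequency b φ u x) s + 2 * δ ^ 2) := by
        rw [hderiv]
        field_simp
    _ ≤ smoothedHeight φ u x t * (t * deriv (smoothedFrequency b φ u x) s + 2 * δ ^ 2) := by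
        gcongr
        exact hφ.smoothedHeight_nonneg u x t

theorem intervalIntegral_frequencyDefect_add_le [Nontrivial V] (hφ : IsRadialCutoff φ)
    (b : OrthonormalBasis ι ℝ V) (hu : HarmonicOnNhd u (ball x R)) (hs : 0 < s) (hst : s ≤ t)
    (htR : t < R) (hH : 0 < smoothedHeight φ u x s) (δ : ℝ) :
    ∫ τ in s..t, (2 * frequencyDefect b φ u x τ + 2 * δ ^ 2 * smoothedHeight φ u x τ)
      ≤ smoothedHeight φ u x t * (t * (smoothedFrequency b φ u x t - smoothedFrequency b φ u x s)
        + 2 * δ ^ 2 * (t - s)) := by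
  have hpos (τ) (hτ : τ ∈ Icc s t) : 0 < smoothedHeight φ u x τ :=
    hφ.smoothedHeight_pos_of_le b hu hs hτ.1 (hτ.2.trans_lt htR) hH
  have hsub : uIcc s t ⊆ Ico s R := uIcc_of_le hst ▸ Icc_subset_Ico_right htR
  have hderiv (τ) (hτ : τ ∈ uIcc s t) :=
    (hφ.differentiableAt_smoothedFrequency b hu hs hH (hsub hτ)).hasDerivAt
  have hint : IntervalIntegrable (deriv (smoothedFrequency b φ u x)) volume s t := by
    refine intervalIntegral.intervalIntegrable_deriv_of_nonneg
      ((hφ.continuousOn_smoothedFrequency b hu hs hH).mono hsub)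
      (fun τ hτ ↦ hderiv τ (Ioo_subset_Icc_self hτ)) fun τ hτ ↦ ?_
    rw [min_eq_left hst, max_eq_right hst] at hτ
    exact hφ.deriv_smoothedFrequency_nonneg b hu (hs.trans hτ.1) (hτ.2.trans htR)
      (hpos τ (Ioo_subset_Icc_self hτ))
  calc ∫ τ in s..t, (2 * frequencyDefect b φ u x τ + 2 * δ ^ 2 * smoothedHeight φ u x τ)
      ≤ ∫ τ in s..t, smoothedHeight φ u x t *
          (t * deriv (smoothedFrequency b φ u x) τ + 2 * δ ^ 2) := by
        rw [intervalIntegral.integral_of_le hst, intervalIntegral.integral_of_le hst]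
        refine integral_mono_of_nonneg (.of_forall fun τ ↦ ?_)
          (((hint.const_mul t).add intervalIntegrable_const).const_mul _).1
          ((ae_restrict_iff' measurableSet_Ioc).2 <| .of_forall fun τ hτ ↦ ?_)
        · have := hφ.frequencyDefect_nonneg b u x τ
          have := hφ.smoothedHeight_nonneg u x τ
          dsimp only [Pi.zero_apply]
          positivity
        · exact hφ.two_mul_frequencyDefect_add_le b hu (hs.trans hτ.1) hτ.2 htR
            (hpos τ (Ioc_subset_Icc_self hτ)) δ
    _ = smoothedHeight φ u x t * (t * (smoothedFrequency b φ u x t - smoothedFrequency b φ u x s)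
          + 2 * δ ^ 2 * (t - s)) := by
        rw [intervalIntegral.integral_const_mul,
          intervalIntegral.integral_add (hint.const_mul t) intervalIntegrable_const,
          intervalIntegral.integral_const_mul, intervalIntegral.integral_const,
          intervalIntegral.integral_eq_sub_of_hasDerivAt hderiv hint, smul_eq_mul,
          mul_comm (t - s)]

theorem setIntegral_norm_fderiv_sub_smul_sq_le [Nontrivial V] (hφ : IsRadialCutoff φ)
    (b : OrthonormalBasis ι ℝ V) (hu : HarmonicOnNhd u (ball x R)) (hs : 0 < s) (hst : s ≤ t)
    (htR : t < R) (hH : 0 < smoothedHeight φ u x s) (hA : MeasurableSet A)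
    (hsA : ∀ y ∈ A, s ≤ ‖y - x‖) (hAt : ∀ y ∈ A, ‖y - x‖ ≤ 3 / 4 * t) :
    ∫ y in A, ‖fderiv ℝ u y (y - x) - smoothedFrequency b φ u x ‖y - x‖ • u y‖ ^ 2
      ≤ smoothedHeight φ u x t * (smoothedFrequency b φ u x t - smoothedFrequency b φ u x s)
        * (t + 2 * (t - s) * (smoothedFrequency b φ u x t - smoothedFrequency b φ u x s)) := by
  set N := smoothedFrequency b φ u x
  have hcont : ContinuousOn N (Icc s t) :=
    (hφ.continuousOn_smoothedFrequency b hu hs hH).mono (Icc_subset_Ico_right htR)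
  calc ∫ y in A, ‖fderiv ℝ u y (y - x) - N ‖y - x‖ • u y‖ ^ 2
      ≤ ∫ τ in s..t, ∫ y in closedBall x t, pinchingDensity b φ u x (N t - N s) τ y :=
        setIntegral_le_intervalIntegral_setIntegral hst (isCompact_closedBall x t)
          ((hφ.continuousOn_pinchingDensity hu.contDiffOn hs hcont _).mono
            (prod_mono_right (closedBall_subset_ball htR)))
          (fun τ _ y ↦ hφ.pinchingDensity_nonneg b u x _ τ y) hA
          (fun y hy ↦ mem_closedBall_iff_norm.2 (by linarith [hAt y hy]))
          (fun y ↦ sq_nonneg _) fun y hy ↦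
            hφ.norm_fderiv_sub_smul_sq_le_intervalIntegral hu.contDiffOn hcont hs hst htR.le
              (hsA y hy) (hAt y hy) fun τ hτ ↦ hφ.abs_smoothedFrequency_sub_le b hu hs hH htR
                ⟨hsA y hy, by linarith [hAt y hy]⟩ hτ
    _ = ∫ τ in s..t, (2 * frequencyDefect b φ u x τ
          + 2 * (N t - N s) ^ 2 * smoothedHeight φ u x τ) :=
        intervalIntegral.integral_congr fun τ hτ ↦ by
          rw [uIcc_of_le hst] at hτ
          exact hφ.setIntegral_pinchingDensity hu.contDiffOn (hs.trans_le hτ.1) hτ.2 htR _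
    _ ≤ smoothedHeight φ u x t * (t * (N t - N s) + 2 * (N t - N s) ^ 2 * (t - s)) :=
        hφ.intervalIntegral_frequencyDefect_add_le b hu hs hst htR hH _
    _ = smoothedHeight φ u x t * (N t - N s) * (t + 2 * (t - s) * (N t - N s)) := by ring

end IsRadialCutoff

end Pinching

section HarmonicOnBall

variable {V F : Type*} [NormedAddCommGroup V] [InnerProductSpace ℝ V] [FiniteDimensional ℝ V]
  [NormedAddCommGroup F] [NormedSpace ℝ F]

theorem exists_harmonicOnNhd_ball {u : V → F} {x : V} {r : ℝ} (hr : 0 ≤ r)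
    (hu : HarmonicOnNhd u (closedBall x r)) : ∃ R, r < R ∧ HarmonicOnNhd u (ball x R) := by
  obtain ⟨δ, hδ, hsub⟩ := (isCompact_closedBall x r).exists_thickening_subset_open
    (isOpen_setOfPred_harmonicAt u) hu
  rw [thickening_closedBall hδ hr] at hsub
  exact ⟨δ + r, by linarith, hsub⟩

end HarmonicOnBall

section FrequencyPinching

variable {V F ι : Type*} [NormedAddCommGroup V] [InnerProductSpace ℝ V] [FiniteDimensional ℝ V]
  [MeasureSpace V] [BorelSpace V] [(volume : Measure V).IsAddHaarMeasure] [Nontrivial V]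
  [NormedAddCommGroup F] [InnerProductSpace ℝ F] [Fintype ι]

theorem stmt_17_general (b : OrthonormalBasis ι ℝ V) {φ : ℝ → ℝ} (hφ : IsRadialCutoff φ)
    {u : V → F} {x : V} {r Λ : ℝ} (hr : 0 < r) (hu : HarmonicOnNhd u (closedBall x (4 * r)))
    (hH : 0 < smoothedHeight φ u x (r / 4)) (hN : smoothedFrequency b φ u x (4 * r) ≤ Λ) :
    ∫ y in ball x (3 * r) \ ball x (r / 3),
        ‖fderiv ℝ u y (y - x) - smoothedFrequency b φ u x ‖y - x‖ • u y‖ ^ 2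
      ≤ 4 ^ (finrank ℝ V - 1 + 2 * Λ) * (4 + 15 / 2 * Λ) * r * smoothedHeight φ u x r *
        (smoothedFrequency b φ u x (4 * r) - smoothedFrequency b φ u x (r / 4)) := by
  obtain ⟨R, hR, hu⟩ := exists_harmonicOnNhd_ball (by positivity) hu
  set H := smoothedHeight φ u x
  set N := smoothedFrequency b φ u x
  have hW : 0 ≤ N (4 * r) - N (r / 4) := sub_nonneg.2 <|
    hφ.monotoneOn_smoothedFrequency b hu (by positivity) hH ⟨le_rfl, by linarith⟩
      ⟨by linarith, hR⟩ (by linarith)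
  have hWΛ : N (4 * r) - N (r / 4) ≤ Λ := by
    linarith [hφ.smoothedFrequency_nonneg b u x (by positivity : 0 ≤ r / 4)]
  have hHr : 0 < H r :=
    hφ.smoothedHeight_pos_of_le b hu (by positivity) (by linarith) (by linarith) hH
  have hgrowth : H (4 * r) ≤ 4 ^ (finrank ℝ V - 1 + 2 * Λ) * H r := by
    simpa [hr.ne'] using
      hφ.smoothedHeight_le_rpow_mul b hu hr (by linarith : r ≤ 4 * r) hR hHr hN
  calc ∫ y in ball x (3 * r) \ ball x (r / 3), ‖fderiv ℝ u y (y - x) - N ‖y - x‖ • u y‖ ^ 2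
      ≤ H (4 * r) * (N (4 * r) - N (r / 4))
          * (4 * r + 2 * (4 * r - r / 4) * (N (4 * r) - N (r / 4))) := by
        refine hφ.setIntegral_norm_fderiv_sub_smul_sq_le b hu (by positivity) (by linarith) hR hH
          (measurableSet_ball.diff measurableSet_ball) (fun y hy ↦ ?_) fun y hy ↦ ?_ <;>
        · rw [Set.mem_sdiff, mem_ball_iff_norm, mem_ball_iff_norm] at hy
          linarith
    _ ≤ 4 ^ (finrank ℝ V - 1 + 2 * Λ) * H r * (N (4 * r) - N (r / 4))
          * (4 * r + 2 * (4 * r - r / 4) * Λ) := by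
        gcongr
        · nlinarith
        · linarith
    _ = _ := by ring

end FrequencyPinching

section FourSpace

variable {F : Type*} [NormedAddCommGroup F]

theorem Hphi_eq_smoothedHeight (φ : ℝ → ℝ) (u : E4 → F) : Hphi φ u = smoothedHeight φ u := by
  ext x t
  simp only [Hphi, smoothedHeight, radialWeight, ← integral_neg, mul_neg, mul_assoc]

variable [InnerProductSpace ℝ F]

theorem Nphi_eq_smoothedFrequency (φ : ℝ → ℝ) (u : E4 → F) :
    Nphi φ u = smoothedFrequency (EuclideanSpace.basisFun (Fin 4) ℝ) φ u := by
  ext x t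
  simp only [Nphi, Dphi, gradSq, Hphi_eq_smoothedHeight, smoothedFrequency, smoothedEnergy,
    gradNormSq, EuclideanSpace.basisFun_apply]

theorem IsHarmonicOn.harmonicOnNhd {u : E4 → F} {Ω : Set E4} (hu : IsHarmonicOn u Ω)
    (hΩ : IsOpen Ω) : HarmonicOnNhd u Ω := by
  refine fun y hy ↦ ⟨(hu.1.of_le (by norm_cast)).contDiffAt (hΩ.mem_nhds hy), ?_⟩
  filter_upwards [hΩ.mem_nhds hy] with z hz
  simpa [laplacian_eq_iteratedFDeriv_orthonormalBasis u (EuclideanSpace.basisFun (Fin 4) ℝ)] using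
    hu.2 z hz

end FourSpace

end

/-- Flat-case analogue of Lemma 5.2: the frequency pinching estimate with fixed center.
Here `W_{r/4}^{4r}(x) = N_φ(x,4r) − N_φ(x,r/4)`. -/
theorem stmt_17 (φ : ℝ → ℝ) (hφs : ContDiff ℝ (⊤ : ℕ∞) φ) (hφa : Antitone φ)
    (hφ1 : ∀ t ≤ (3/4 : ℝ), φ t = 1) (hφ0 : ∀ t, (1:ℝ) ≤ t → φ t = 0)
    (Λ : ℝ) (hΛ : 0 < Λ) :
    ∃ C > (0:ℝ),
      ∀ (F : Type) [NormedAddCommGroup F] [InnerProductSpace ℝ F] [FiniteDimensional ℝ F],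
      ∀ (u : E4 → F) (Ω : Set E4), IsOpen Ω → IsHarmonicOn u Ω →
      ∀ (x : E4) (r : ℝ), 0 < r → closedBall x (4 * r) ⊆ Ω →
      (∀ t ∈ Set.Ioc (0:ℝ) (4 * r), 0 < Hphi φ u x t ∧ Nphi φ u x t ≤ Λ) →
      (∫ y in ball x (3 * r) \ ball x (r / 3),
          ‖fderiv ℝ u y (y - x) - (Nphi φ u x ‖y - x‖) • u y‖ ^ 2)
        ≤ C * r * Hphi φ u x r * (Nphi φ u x (4 * r) - Nphi φ u x (r / 4)) := by
  have hφ : IsRadialCutoff φ := ⟨hφs.of_le (by norm_cast), hφa, hφ1, hφ0⟩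
  refine ⟨4 ^ (3 + 2 * Λ) * (4 + 15 / 2 * Λ), by positivity, ?_⟩
  intro F _ _ _ u Ω hΩ hu x r hr hball hHN
  simp only [Hphi_eq_smoothedHeight, Nphi_eq_smoothedFrequency] at hHN ⊢
  have hdim : (Module.finrank ℝ E4 : ℝ) - 1 = 3 := by norm_num
  have h := stmt_17_general (EuclideanSpace.basisFun (Fin 4) ℝ) hφ hr
    ((hu.harmonicOnNhd hΩ).mono hball)
    (hHN (r / 4) ⟨by positivity, by linarith⟩).1 (hHN (4 * r) ⟨by positivity, le_rfl⟩).2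
  rwa [hdim] at h
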